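/- arXiv:0911.0445 — 2 statements merged into one kernel-verified Lean document; each statement's English description precedes it below -/
import Mathlib

section
/- Let n ≥ 1 and let G be a subgroup of S_n. Then the semigroup ⟨G,a⟩∖G is regular for every singular transformation a ∈ T_n∖S_n if and only if G has the universal transversal property. -/
/-!
Let `a` have image `I` and kernel classes `P`. Then `I g` is a transversal of `P` iff `a` is
injective on `I g`, that is, iff `rank (a g a) = rank a`. Every pair `(I, P)` with `|P| = |I|`
arises from some `a`, so `G` has the universal transversal property iff each `a` has such a
`g ∈ G`.

If `a = a v a` with `v ∈ ⟨G, a⟩ ∖ G`, write `v = g a w` with `g ∈ G`; then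
`rank a = rank (a g a w a) ≤ rank (a g a) ≤ rank a`. Conversely, if `rank (u g u) = rank u`, then
`g u` is injective on the image of `u`, so right multiplication by `g u` is injective on
transformations with image inside that of `u`. It maps the finite set `{u} ∪ u ⟨G, a⟩ u` into
`u ⟨G, a⟩ u`, whence `u ∈ u ⟨G, a⟩ u`. Finally `u = u v u` gives `u = u (v u v) u`, and `v u v` is
singular because `u` is.
-/

open Finset

/-- Transformations of a set `α`, composed left-to-right (acting on the right):
`x (a * b) = (x a) b`. -/
structure Transf (α : Type*) where
  toFun : α → α

namespace Transf

variable {α : Type*}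

instance : Semigroup (Transf α) where
  mul a b := ⟨fun x => b.toFun (a.toFun x)⟩
  mul_assoc _ _ _ := rfl

/-- The transformation induced by a permutation. -/
def ofPerm (g : Equiv.Perm α) : Transf α := ⟨g⟩

/-- The rank of a transformation: the cardinality of its image. -/
noncomputable def rank (a : Transf α) : ℕ := Set.ncard (Set.range a.toFun)

end Transf

/-- The subsemigroup `⟨G, a⟩` generated by `G ∪ {a}`. -/
def genGA {α : Type*} (G : Subgroup (Equiv.Perm α)) (a : Transf α) :
    Subsemigroup (Transf α) :=
  Subsemigroup.closure (insert a (Transf.ofPerm '' (G : Set (Equiv.Perm α))))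

/-- The set `⟨G, a⟩ ∖ G`. -/
def genGAminusG {α : Type*} (G : Subgroup (Equiv.Perm α)) (a : Transf α) :
    Set (Transf α) :=
  (genGA G a : Set (Transf α)) \ (Transf.ofPerm '' (G : Set (Equiv.Perm α)))

/-- The set of conjugates `a^g = g⁻¹ a g` with `g ∈ G`. -/
def conjSet {α : Type*} (G : Subgroup (Equiv.Perm α)) (a : Transf α) : Set (Transf α) :=
  (fun g : Equiv.Perm α => Transf.ofPerm g⁻¹ * a * Transf.ofPerm g) '' (G : Set (Equiv.Perm α))

/-- The subsemigroup `⟨a^g | g ∈ G⟩`. -/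
def genConj {α : Type*} (G : Subgroup (Equiv.Perm α)) (a : Transf α) :
    Subsemigroup (Transf α) :=
  Subsemigroup.closure (conjSet G a)

/-- A subset of the transformation semigroup is regular if every element `u` of it
admits `v` in the set with `u = u v u`. -/
def IsRegularSet {α : Type*} (S : Set (Transf α)) : Prop :=
  ∀ u ∈ S, ∃ v ∈ S, u * v * u = u

/-- A subset of the transformation semigroup is idempotent generated if it coincides with
the subsemigroup generated by its idempotent elements. -/
def IsIdemGen {α : Type*} (S : Set (Transf α)) : Prop :=
  S = ↑(Subsemigroup.closure {u | u ∈ S ∧ u * u = u})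

/-- `T` is a transversal for the partition `P`: it meets each class in exactly one point. -/
def IsTransversal {α : Type*} [DecidableEq α] [Fintype α] (T : Finset α)
    (P : Finpartition (Finset.univ : Finset α)) : Prop :=
  ∀ p ∈ P.parts, (T ∩ p).card = 1

/-- The universal transversal property: for every subset `I` and every partition `P`
with exactly `|I|` classes, some `G`-translate of `I` is a transversal for `P`. -/
def HasUTP {α : Type*} [DecidableEq α] [Fintype α] (G : Subgroup (Equiv.Perm α)) : Prop :=
  ∀ (I : Finset α) (P : Finpartition (Finset.univ : Finset α)),
    P.parts.card = I.card → ∃ g ∈ G, IsTransversal (I.image ⇑g) P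

namespace Transf

variable {α : Type*}

theorem toFun_injective : Function.Injective (toFun : Transf α → α → α) :=
  fun _ _ h => congrArg mk h

instance [Finite α] : Finite (Transf α) := Finite.of_injective toFun toFun_injective

theorem range_mul (a b : Transf α) :
    Set.range (a * b).toFun = b.toFun '' Set.range a.toFun :=
  Set.range_comp b.toFun a.toFun

theorem bijective_mul_iff [Finite α] {a b : Transf α} :
    Function.Bijective (a * b).toFun ↔ Function.Bijective a.toFun ∧ Function.Bijective b.toFun := by
  refine ⟨fun h => ⟨?_, ?_⟩, fun h => h.2.comp h.1⟩
  · exact Finite.injective_iff_bijective.1 (Function.Injective.of_comp h.1)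
  · exact Finite.surjective_iff_bijective.1 (Function.Surjective.of_comp h.2)

theorem rank_mul_le_left [Finite α] (a b : Transf α) : rank (a * b) ≤ rank a := by
  rw [rank, range_mul]
  exact Set.ncard_image_le

theorem rank_mul_eq_left_iff [Finite α] {a b : Transf α} :
    rank (a * b) = rank a ↔ Set.InjOn b.toFun (Set.range a.toFun) := by
  rw [rank, range_mul]
  exact Set.ncard_image_iff

theorem rank_mul_ofPerm [Finite α] (a : Transf α) (g : Equiv.Perm α) :
    rank (a * ofPerm g) = rank a :=
  rank_mul_eq_left_iff.2 g.injective.injOn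

theorem injOn_mul_right {a b : Transf α} (hb : Set.InjOn b.toFun (Set.range a.toFun)) :
    Set.InjOn (· * b) {s | Set.range s.toFun ⊆ Set.range a.toFun} := by
  intro s hs t ht hst
  refine toFun_injective (funext fun x => hb (hs ⟨x, rfl⟩) (ht ⟨x, rfl⟩) ?_)
  exact congrFun (congrArg toFun hst) x

theorem exists_mul_mul_eq_of_rank_eq [Finite α] {M : Subsemigroup (Transf α)} {u g : Transf α}
    (hu : u ∈ M) (hg : g ∈ M) (hrank : rank (u * g * u) = rank u) :
    ∃ v ∈ M, u * v * u = u := by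
  let X : Set (Transf α) := (fun v => u * v * u) '' M
  have hmaps : Set.MapsTo (· * (g * u)) (insert u X) X := by
    rintro s (rfl | ⟨v, hv, rfl⟩)
    · exact ⟨g, hg, mul_assoc s g s⟩
    · exact ⟨v * u * g, mul_mem (mul_mem hv hu) hg, by simp only [mul_assoc]⟩
  have hrange : insert u X ⊆ {s | Set.range s.toFun ⊆ Set.range u.toFun} := by
    rintro s (rfl | ⟨v, -, rfl⟩)
    · exact Set.Subset.rfl
    · exact Set.range_comp_subset_range (u * v).toFun u.toFun
  have hinj : Set.InjOn (· * (g * u)) (insert u X) := by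
    rw [mul_assoc] at hrank
    exact (injOn_mul_right (rank_mul_eq_left_iff.1 hrank)).mono hrange
  have hbij : Set.BijOn (· * (g * u)) (insert u X) (insert u X) :=
    ((Set.toFinite _).injOn_iff_bijOn_of_mapsTo
      fun s hs => Set.mem_insert_of_mem u (hmaps hs)).1 hinj
  obtain ⟨s, hs, hsu⟩ := hbij.surjOn (Set.mem_insert u X)
  exact (hsu ▸ hmaps hs : u ∈ X)

end Transf

section Generated

open Transf

variable {α : Type*} {G : Subgroup (Equiv.Perm α)} {a u v : Transf α} {g : Equiv.Perm α}

theorem ofPerm_mem_genGA (hg : g ∈ G) : ofPerm g ∈ genGA G a :=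
  Subsemigroup.subset_closure (Or.inr ⟨g, hg, rfl⟩)

theorem self_mem_genGA : a ∈ genGA G a :=
  Subsemigroup.subset_closure (Or.inl rfl)

theorem exists_eq_ofPerm_or_eq_ofPerm_mul_mul (hv : v ∈ genGA G a) :
    ∃ g ∈ G, v = ofPerm g ∨ ∃ w, v = ofPerm g * a * w := by
  induction hv using Subsemigroup.closure_induction with
  | mem v hv =>
    rcases hv with rfl | ⟨g, hg, rfl⟩
    · exact ⟨1, G.one_mem, Or.inr ⟨ofPerm 1, rfl⟩⟩
    · exact ⟨g, hg, Or.inl rfl⟩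
  | mul u v _ _ hu hv =>
    obtain ⟨g, hg, rfl | ⟨w, rfl⟩⟩ := hu
    · obtain ⟨h, hh, rfl | ⟨w, rfl⟩⟩ := hv
      · exact ⟨h * g, G.mul_mem hh hg, Or.inl rfl⟩
      · exact ⟨h * g, G.mul_mem hh hg, Or.inr ⟨w, rfl⟩⟩
    · exact ⟨g, hg, Or.inr ⟨w * v, mul_assoc _ _ _⟩⟩

theorem exists_eq_ofPerm_mul_mul (hv : v ∈ genGAminusG G a) :
    ∃ g ∈ G, ∃ w, v = ofPerm g * a * w := by
  obtain ⟨g, hg, rfl | hw⟩ := exists_eq_ofPerm_or_eq_ofPerm_mul_mul hv.1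
  · exact absurd ⟨g, hg, rfl⟩ hv.2
  · exact ⟨g, hg, hw⟩

theorem mem_genGAminusG_iff [Finite α] (ha : ¬ Function.Bijective a.toFun) :
    u ∈ genGAminusG G a ↔ u ∈ genGA G a ∧ ¬ Function.Bijective u.toFun := by
  refine ⟨fun hu => ⟨hu.1, fun hbij => ?_⟩, fun hu => ⟨hu.1, ?_⟩⟩
  · obtain ⟨g, -, w, rfl⟩ := exists_eq_ofPerm_mul_mul hu
    exact ha (bijective_mul_iff.1 (bijective_mul_iff.1 hbij).1).2
  · rintro ⟨g, -, rfl⟩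
    exact hu.2 g.bijective

theorem exists_rank_eq_of_mul_mul_eq [Finite α] (hv : v ∈ genGAminusG G a)
    (hava : a * v * a = a) : ∃ g ∈ G, rank (a * ofPerm g * a) = rank a := by
  obtain ⟨g, hg, w, rfl⟩ := exists_eq_ofPerm_mul_mul hv
  refine ⟨g, hg, le_antisymm ?_ ?_⟩
  · rw [mul_assoc]
    exact rank_mul_le_left _ _
  · calc rank a = rank (a * (ofPerm g * a * w) * a) := by rw [hava]
      _ = rank (a * ofPerm g * a * (w * a)) := by simp only [mul_assoc]
      _ ≤ rank (a * ofPerm g * a) := rank_mul_le_left _ _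

theorem exists_mem_genGAminusG_mul_mul_eq [Finite α] (ha : ¬ Function.Bijective a.toFun)
    (hu : u ∈ genGAminusG G a) (hg : g ∈ G) (hrank : rank (u * ofPerm g * u) = rank u) :
    ∃ v ∈ genGAminusG G a, u * v * u = u := by
  obtain ⟨v, hv, huvu⟩ := exists_mul_mul_eq_of_rank_eq hu.1 (ofPerm_mem_genGA hg) hrank
  rw [mem_genGAminusG_iff ha] at hu
  have hsing : ¬ Function.Bijective (v * u * v).toFun := fun h =>
    hu.2 (bijective_mul_iff.1 (bijective_mul_iff.1 h).1).2
  refine ⟨v * u * v, (mem_genGAminusG_iff ha).2 ⟨mul_mem (mul_mem hv hu.1) hv, hsing⟩, ?_⟩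
  calc u * (v * u * v) * u = u * v * u * v * u := by simp only [mul_assoc]
    _ = u := by rw [huvu, huvu]

end Generated

section Transversal

open Transf

theorem parts_eq_image_part {α : Type*} [DecidableEq α] {s : Finset α} (P : Finpartition s) :
    P.parts = s.image P.part := by
  refine subset_antisymm (fun p hp => ?_) (image_subset_iff.2 fun x hx => P.part_mem.2 hx)
  obtain ⟨x, hx, rfl⟩ := P.part_surjOn hp
  exact mem_image_of_mem P.part hx

variable {α : Type*} [Fintype α] [DecidableEq α]

theorem isTransversal_iff_injOn_part {T : Finset α} {P : Finpartition (univ : Finset α)}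
    (hcard : P.parts.card = T.card) : IsTransversal T P ↔ Set.InjOn P.part T := by
  refine ⟨fun hT x hx y hy hxy => ?_, fun hinj p hp => ?_⟩
  · refine card_le_one.1 (hT _ (P.part_mem.2 (mem_univ x))).le x ?_ y ?_
    · exact mem_inter.2 ⟨hx, P.mem_part (mem_univ x)⟩
    · exact mem_inter.2 ⟨hy, hxy ▸ P.mem_part (mem_univ y)⟩
  · have hsurj : Set.SurjOn P.part T P.parts :=
      surjOn_of_injOn_of_card_le P.part (fun x _ => P.part_mem.2 (mem_univ x)) hinj hcard.le
    obtain ⟨x, hx, rfl⟩ := hsurj hp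
    refine card_eq_one.2 ⟨x, eq_singleton_iff_unique_mem.2 ⟨?_, fun y hy => ?_⟩⟩
    · exact mem_inter.2 ⟨hx, P.mem_part (mem_univ x)⟩
    · obtain ⟨hyT, hyx⟩ := mem_inter.1 hy
      exact hinj hyT hx (P.part_eq_of_mem hp hyx)

variable {β : Type*} [DecidableEq β]

/-- The kernel of a map `f` on a finite type, as the partition of its domain into the nonempty
fibres of `f`. -/
def kerFinpartition (f : α → β) : Finpartition (univ : Finset α) :=
  Finpartition.ofSetoid (Setoid.ker f)

theorem part_kerFinpartition_eq_iff {f : α → β} {x y : α} :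
    (kerFinpartition f).part x = (kerFinpartition f).part y ↔ f x = f y := by
  rw [← Finpartition.mem_part_iff_part_eq_part _ (mem_univ x) (mem_univ y)]
  exact Finpartition.mem_part_ofSetoid_iff_rel.trans eq_comm

theorem kerFinpartition_eq_of_forall {f : α → β} {P : Finpartition (univ : Finset α)}
    (h : ∀ x y, f x = f y ↔ P.part x = P.part y) : kerFinpartition f = P := by
  have hpart : (kerFinpartition f).part = P.part := by
    ext x y
    rw [Finpartition.mem_part_iff_part_eq_part _ (mem_univ y) (mem_univ x),
      Finpartition.mem_part_iff_part_eq_part _ (mem_univ y) (mem_univ x),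
      part_kerFinpartition_eq_iff, h]
  ext1
  rw [parts_eq_image_part, parts_eq_image_part, hpart]

theorem card_parts_kerFinpartition (f : α → β) :
    (kerFinpartition f).parts.card = (univ.image f).card := by
  let fibre (z : β) : Finset α := {x | z = f x}
  have hparts : (kerFinpartition f).parts = (univ.image f).image fibre := by
    rw [image_image]
    rfl
  have hinj : Set.InjOn fibre (univ.image f) := by
    intro z hz z' _ hzz'
    obtain ⟨x, -, rfl⟩ := mem_image.1 hz
    have hx : x ∈ fibre z' := hzz' ▸ mem_filter.2 ⟨mem_univ x, rfl⟩
    exact (mem_filter.1 hx).2.symm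
  rw [hparts, card_image_of_injOn hinj]

theorem exists_image_eq_and_kerFinpartition_eq {I : Finset β}
    {P : Finpartition (univ : Finset α)} (hcard : P.parts.card = I.card) :
    ∃ f : α → β, univ.image f = I ∧ kerFinpartition f = P := by
  let e : P.parts ≃ I := equivOfCardEq hcard
  let f (x : α) : β := e ⟨P.part x, P.part_mem.2 (mem_univ x)⟩
  refine ⟨f, subset_antisymm ?_ fun z hz => ?_, kerFinpartition_eq_of_forall fun x y => ?_⟩
  · exact image_subset_iff.2 fun x _ => (e _).2
  · obtain ⟨⟨p, hp⟩, hpz⟩ := e.surjective ⟨z, hz⟩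
    obtain ⟨x, hx, rfl⟩ := P.part_surjOn hp
    exact mem_image.2 ⟨x, hx, congrArg Subtype.val hpz⟩
  · simp [f, Subtype.ext_iff]

theorem isTransversal_image_iff_rank_eq (a : Transf α) (g : Equiv.Perm α) :
    IsTransversal ((univ.image a.toFun).image g) (kerFinpartition a.toFun) ↔
      rank (a * ofPerm g * a) = rank a := by
  have hcard : (kerFinpartition a.toFun).parts.card = ((univ.image a.toFun).image g).card := by
    rw [card_parts_kerFinpartition, card_image_of_injective _ g.injective]
  have himage : ((univ.image a.toFun).image g : Set α) = Set.range (a * ofPerm g).toFun := by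
    rw [coe_image, coe_image, coe_univ, Set.image_univ, range_mul]
    rfl
  calc IsTransversal ((univ.image a.toFun).image g) (kerFinpartition a.toFun)
    _ ↔ Set.InjOn a.toFun (Set.range (a * ofPerm g).toFun) := by
      rw [isTransversal_iff_injOn_part hcard, himage]
      simp only [Set.InjOn, part_kerFinpartition_eq_iff]
    _ ↔ rank (a * ofPerm g * a) = rank a := by
      rw [← rank_mul_eq_left_iff, rank_mul_ofPerm]

theorem hasUTP_iff_forall_exists_rank_eq {G : Subgroup (Equiv.Perm α)} :
    HasUTP G ↔ ∀ a : Transf α, ∃ g ∈ G, rank (a * ofPerm g * a) = rank a := by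
  simp only [← isTransversal_image_iff_rank_eq]
  refine ⟨fun h a => h _ _ (card_parts_kerFinpartition a.toFun), fun h I P hcard => ?_⟩
  obtain ⟨f, rfl, rfl⟩ := exists_image_eq_and_kerFinpartition_eq hcard
  exact h ⟨f⟩

end Transversal

theorem stmt1_general {α : Type*} [Fintype α] [DecidableEq α] (G : Subgroup (Equiv.Perm α)) :
    (∀ a : Transf α, ¬ Function.Bijective a.toFun →
      IsRegularSet (genGAminusG G a)) ↔ HasUTP G := by
  rw [hasUTP_iff_forall_exists_rank_eq]
  refine ⟨fun hreg a => ?_, fun hrank a ha u hu => ?_⟩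
  · by_cases ha : Function.Bijective a.toFun
    · exact ⟨1, G.one_mem, Transf.rank_mul_eq_left_iff.2 ha.1.injOn⟩
    · obtain ⟨v, hv, hava⟩ := hreg a ha a ((mem_genGAminusG_iff ha).2 ⟨self_mem_genGA, ha⟩)
      exact exists_rank_eq_of_mul_mul_eq hv hava
  · obtain ⟨g, hg, hgu⟩ := hrank u
    exact exists_mem_genGAminusG_mul_mul_eq ha hu hg hgu

theorem stmt1 (n : ℕ) (hn : 1 ≤ n) (G : Subgroup (Equiv.Perm (Fin n))) :
    (∀ a : Transf (Fin n), ¬ Function.Bijective a.toFun →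
      IsRegularSet (genGAminusG G a)) ↔ HasUTP G :=
  stmt1_general G
end

section
/- Let n ≥ 1 and let G be a subgroup of S_n. Then the semigroup ⟨a^g | g ∈ G⟩ generated by the conjugates of a by elements of G is regular for every singular transformation a ∈ T_n∖S_n if and only if G has the universal transversal property. -/
/-!
Let `P` be the kernel partition of a map `f` and `I` its image. A translate `I g` is a transversal
for `P` exactly when `f` maps it bijectively onto `I`, so the universal transversal property says
that for every `f` some `g ∈ G` makes `g f` injective on `im f`.

If `a = a v a` with `v ∈ ⟨a^g | g ∈ G⟩`, then `v = g a w` for some `g ∈ G`, because `v` starts with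
a conjugate of `a`; hence `g a` has a left inverse on `im a`.

Conversely, if `g u` is injective on `im u`, it permutes this finite set, and for some `m ≥ 2` both
`g ^ m = 1` and `(g u) ^ m` fixes `im u` pointwise. So `u = u v u` for `v = (g u) ^ (m - 1) g`, and
since `g = (g⁻¹) ^ (m - 1)`, this `v` is the product `u^(g⁻¹) u^(g⁻²) ⋯ u^(g^(-(m - 1)))` of
conjugates of `u`.
-/

open Finset

namespace Transf

variable {α : Type*}

@[ext]
theorem ext {a b : Transf α} (h : ∀ x, a.toFun x = b.toFun x) : a = b := by
  cases a
  cases b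
  exact congrArg mk (funext h)

@[simp]
theorem toFun_mul (a b : Transf α) (x : α) : (a * b).toFun x = b.toFun (a.toFun x) := rfl

@[simp]
theorem toFun_ofPerm (g : Equiv.Perm α) (x : α) : (ofPerm g).toFun x = g x := rfl

/-- Conjugation `a ↦ a^g = g⁻¹ a g` as an endomorphism of the transformation semigroup. As
permutations multiply right to left in Mathlib, this is a left action. -/
def conj (g : Equiv.Perm α) : Transf α →ₙ* Transf α where
  toFun a := ofPerm g⁻¹ * a * ofPerm g
  map_mul' a b := by ext; simp

@[simp]
theorem toFun_conj (g : Equiv.Perm α) (a : Transf α) (x : α) :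
    (conj g a).toFun x = g (a.toFun (g⁻¹ x)) := rfl

theorem conj_conj (g h : Equiv.Perm α) (a : Transf α) : conj g (conj h a) = conj (g * h) a := by
  ext
  simp

/-- The transformation is the product `u^g u^(g²) ⋯ u^(g^(k + 1))`. -/
theorem mk_pow_comp_iterate_mem {S : Subsemigroup (Transf α)} {g : Equiv.Perm α}
    (hS : ∀ v ∈ S, conj g v ∈ S) {u : Transf α} (hu : u ∈ S) (k : ℕ) :
    (⟨⇑(g ^ (k + 1)) ∘ (u.toFun ∘ ⇑g⁻¹)^[k + 1]⟩ : Transf α) ∈ S := by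
  induction k with
  | zero => exact hS u hu
  | succ k ih =>
    convert S.mul_mem (hS u hu) (hS _ ih) using 1
    ext x
    simp [pow_succ' g (k + 1)]

end Transf

theorem isPeriodicPt_factorial_card_of_injOn {α : Type*} [Fintype α] {f : α → α} {s : Set α}
    (hf : Set.MapsTo f s s) (hinj : Set.InjOn f s) {x : α} (hx : x ∈ s) :
    Function.IsPeriodicPt f (Fintype.card α).factorial x := by
  have periodic_restrict : ⟨x, hx⟩ ∈ Function.periodicPts (hf.restrict f s s) :=
    (hf.restrict_inj.2 hinj).mem_periodicPts _
  have periodic : x ∈ Function.periodicPts f :=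
    Function.Semiconj.mapsTo_periodicPts (g := Subtype.val) (fun _ => rfl) periodic_restrict
  exact Function.isPeriodicPt_factorial_card_of_mem_periodicPts periodic

section GenConj

variable {α : Type*} {G : Subgroup (Equiv.Perm α)} {a u v : Transf α} {g : Equiv.Perm α}

theorem self_mem_genConj (G : Subgroup (Equiv.Perm α)) (a : Transf α) : a ∈ genConj G a :=
  Subsemigroup.subset_closure ⟨1, G.one_mem, rfl⟩

theorem conj_mem_genConj (hg : g ∈ G) (hv : v ∈ genConj G a) : Transf.conj g v ∈ genConj G a := by
  have map_le : (genConj G a).map (Transf.conj g) ≤ genConj G a := by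
    rw [genConj, MulHom.map_mclosure, Subsemigroup.closure_le]
    rintro _ ⟨_, ⟨h, hh, rfl⟩, rfl⟩
    exact Subsemigroup.subset_closure ⟨g * h, G.mul_mem hg hh, (Transf.conj_conj g h a).symm⟩
  exact map_le (Subsemigroup.mem_map_of_mem _ hv)

theorem exists_eq_ofPerm_mul_mul_of_mem_genConj (hv : v ∈ genConj G a) :
    ∃ g ∈ G, ∃ w, v = Transf.ofPerm g * a * w := by
  induction hv using Subsemigroup.closure_induction with
  | mem v hv =>
    obtain ⟨g, hg, rfl⟩ := hv
    exact ⟨g⁻¹, G.inv_mem hg, Transf.ofPerm g, rfl⟩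
  | mul v v' _ _ ih _ =>
    obtain ⟨g, hg, w, rfl⟩ := ih
    exact ⟨g, hg, w * v', mul_assoc _ _ _⟩

theorem exists_injOn_range_of_mul_mul_eq (hv : v ∈ genConj G a) (h : a * v * a = a) :
    ∃ g ∈ G, Set.InjOn (a.toFun ∘ g) (Set.range a.toFun) := by
  obtain ⟨g, hg, w, rfl⟩ := exists_eq_ofPerm_mul_mul_of_mem_genConj hv
  have leftInv : Set.LeftInvOn (a.toFun ∘ w.toFun) (a.toFun ∘ g) (Set.range a.toFun) :=
    Set.forall_mem_range.2 fun x => congrArg (fun b : Transf α => b.toFun x) h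
  exact ⟨g, hg, leftInv.injOn⟩

theorem exists_mem_genConj_mul_mul_eq [Finite α] (hu : u ∈ genConj G a) (hg : g ∈ G)
    (hinj : Set.InjOn (u.toFun ∘ g) (Set.range u.toFun)) :
    ∃ v ∈ genConj G a, u * v * u = u := by
  classical
  cases nonempty_fintype α
  -- The factor `2` makes the exponent `k + 1` of the iterate in the witness positive.
  obtain ⟨k, hk⟩ : ∃ k, k + 2 = (Fintype.card α).factorial * 2 :=
    ⟨_, Nat.sub_add_cancel (by have := (Fintype.card α).factorial_pos; lia)⟩
  have pow_eq_one : g ^ (k + 2) = 1 := by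
    rw [hk, ← Fintype.card_perm, pow_mul, pow_card_eq_one, one_pow]
  have inv_pow_eq : g⁻¹ ^ (k + 1) = g := by
    rw [inv_pow, inv_eq_iff_mul_eq_one, ← pow_succ, pow_eq_one]
  have iterate_eq (x : α) : (u.toFun ∘ g)^[k + 2] (u.toFun x) = u.toFun x := by
    have mapsTo : Set.MapsTo (u.toFun ∘ g) (Set.range u.toFun) (Set.range u.toFun) :=
      fun _ _ => Set.mem_range_self _
    rw [hk]
    exact (isPeriodicPt_factorial_card_of_injOn mapsTo hinj (Set.mem_range_self x)).mul_const 2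
  refine ⟨_, Transf.mk_pow_comp_iterate_mem
    (fun v hv => conj_mem_genConj (G.inv_mem hg) hv) hu k, Transf.ext fun x => ?_⟩
  rw [inv_pow_eq, inv_inv]
  exact (Function.iterate_succ_apply' _ _ _).symm.trans (iterate_eq x)

end GenConj

section KerPartition

variable {α : Type*} [Fintype α] [DecidableEq α]

/-- The partition of a finite type into the nonempty fibres of a map, used to translate between
partitions and transformations. -/
def kerPartition {β : Type*} [DecidableEq β] (f : α → β) : Finpartition (univ : Finset α) :=
  Finpartition.ofSetoid (Setoid.ker f)

section Fibres

variable {β : Type*} [DecidableEq β] (f : α → β)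

theorem parts_kerPartition :
    (kerPartition f).parts = (univ.image f).image fun i => ({x | f x = i} : Finset α) := by
  have parts_eq : (kerPartition f).parts = univ.image fun x => ({y | f x = f y} : Finset α) := rfl
  simp only [parts_eq, image_image, Function.comp_def, eq_comm]

theorem card_parts_kerPartition : #(kerPartition f).parts = #(univ.image f) := by
  rw [parts_kerPartition]
  refine card_image_of_injOn fun i hi j _ (fibre_eq : ({x | f x = i} : Finset α) = _) => ?_
  obtain ⟨x, -, rfl⟩ := mem_image.1 hi
  have mem_fibre : x ∈ ({y | f y = f x} : Finset α) := by simp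
  simpa [fibre_eq] using mem_fibre

theorem isTransversal_kerPartition_iff_bijOn {T : Finset α} :
    IsTransversal T (kerPartition f) ↔ Set.BijOn f T (Set.range f) := by
  have transversal_iff : IsTransversal T (kerPartition f) ↔
      ∀ x, ∃! t, t ∈ T ∧ f t = f x := by
    simp [IsTransversal, parts_kerPartition, card_eq_one_iff_existsUnique]
  rw [transversal_iff]
  constructor
  · intro existsUnique
    refine ⟨fun x _ => Set.mem_range_self x, fun x hx y hy hxy => ?_, ?_⟩
    · exact (existsUnique y).unique ⟨hx, hxy⟩ ⟨hy, rfl⟩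
    · rintro _ ⟨x, rfl⟩
      exact (existsUnique x).exists
  · intro bijOn x
    obtain ⟨t, ht, htx⟩ := bijOn.surjOn (Set.mem_range_self x)
    exact ⟨t, ⟨ht, htx⟩, fun y ⟨hy, hyx⟩ => bijOn.injOn hy ht (hyx.trans htx.symm)⟩

end Fibres

theorem exists_image_eq_and_kerPartition_eq {β : Type*} [DecidableEq β]
    {P : Finpartition (univ : Finset α)} {I : Finset β} (h : #P.parts = #I) :
    ∃ f : α → β, univ.image f = I ∧ kerPartition f = P := by
  let e : P.parts ≃ I := equivOfCardEq h
  let f : α → β := fun x => e ⟨P.part x, P.part_mem.2 (mem_univ x)⟩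
  have f_eq_iff (x y : α) : f y = f x ↔ y ∈ P.part x := by
    simp [f, P.mem_part_iff_part_eq_part]
  have image_part : univ.image P.part = P.parts :=
    (image_subset_iff.2 fun x hx => P.part_mem.2 hx).antisymm fun p hp => by
      simpa using P.part_surjOn hp
  refine ⟨f, ?_, Finpartition.ext ?_⟩
  · refine (image_subset_iff.2 fun x _ => (e _).2).antisymm fun i hi => ?_
    obtain ⟨p, hp⟩ := e.surjective ⟨i, hi⟩
    obtain ⟨x, -, hx⟩ := P.part_surjOn p.2
    exact mem_image.2 ⟨x, mem_univ x, by simp [hx, hp]⟩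
  · simp [parts_kerPartition, image_image, Function.comp_def, f_eq_iff, image_part]

theorem isTransversal_image_kerPartition_iff_injOn (f : α → α) (g : Equiv.Perm α) :
    IsTransversal ((univ.image f).image g) (kerPartition f) ↔
      Set.InjOn (f ∘ g) (Set.range f) := by
  rw [isTransversal_kerPartition_iff_bijOn, g.injective.injOn.comp_iff]
  have coe_image_image : (((univ.image f).image g : Finset α) : Set α) = g '' Set.range f := by
    simp
  refine ⟨fun bijOn => coe_image_image ▸ bijOn.injOn, fun injOn => ?_⟩
  rw [← coe_image_image] at injOn
  have mapsTo : Set.MapsTo f ((univ.image f).image g) (univ.image f) := fun x _ => by simp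
  have surjOn := surjOn_of_injOn_of_card_le f mapsTo injOn
    (card_image_of_injective _ g.injective).ge
  simpa using Set.BijOn.mk mapsTo injOn surjOn

theorem hasUTP_iff_forall_exists_injOn {G : Subgroup (Equiv.Perm α)} :
    HasUTP G ↔ ∀ f : α → α, ∃ g ∈ G, Set.InjOn (f ∘ g) (Set.range f) := by
  simp only [← isTransversal_image_kerPartition_iff_injOn]
  constructor
  · intro utp f
    exact utp (univ.image f) (kerPartition f) (card_parts_kerPartition f)
  · intro exists_transversal I P h
    obtain ⟨f, rfl, rfl⟩ := exists_image_eq_and_kerPartition_eq h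
    exact exists_transversal f

end KerPartition

theorem stmt2_general {α : Type*} [Fintype α] [DecidableEq α] (G : Subgroup (Equiv.Perm α)) :
    (∀ a : Transf α, ¬ Function.Bijective a.toFun →
      IsRegularSet (genConj G a : Set (Transf α))) ↔ HasUTP G := by
  rw [hasUTP_iff_forall_exists_injOn]
  constructor
  · intro regular f
    by_cases bijective : Function.Bijective f
    · exact ⟨1, G.one_mem, bijective.injective.injOn⟩
    · obtain ⟨v, hv, h⟩ := regular ⟨f⟩ bijective ⟨f⟩ (self_mem_genConj G ⟨f⟩)
      exact exists_injOn_range_of_mul_mul_eq hv h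
  · intro exists_injOn a _ u hu
    obtain ⟨g, hg, hinj⟩ := exists_injOn u.toFun
    exact exists_mem_genConj_mul_mul_eq hu hg hinj

theorem stmt2 (n : ℕ) (hn : 1 ≤ n) (G : Subgroup (Equiv.Perm (Fin n))) :
    (∀ a : Transf (Fin n), ¬ Function.Bijective a.toFun →
      IsRegularSet (genConj G a : Set (Transf (Fin n)))) ↔ HasUTP G :=
  stmt2_general G
end
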